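/- Let F : S → G(S) be a Markov chain on a measurable space S and let A, B ⊆ S be measurable. If there exists a generalised Streett supermartingale for (F, A, B), then ℙ_{s₀}[Streett(A,B)] = 1 for every initial state s₀ ∈ S. -/

import Mathlib

open MeasureTheory ProbabilityTheory Set
open scoped ENNReal NNReal

variable {S : Type*} [MeasurableSpace S]

/-- Prepend an initial state to a trace. -/
def prep (s₀ : S) (ω : ℕ → S) : ℕ → S := fun n => Nat.rec s₀ (fun k _ => ω k) n

/-- The Streett condition for the pair `(A, B)`: either `A` is visited only
finitely often, or `B` is visited infinitely often. -/
def streett (A B : Set S) : Set (ℕ → S) :=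
  {ω | {i : ℕ | ω i ∈ A}.Finite ∨ {i : ℕ | ω i ∈ B}.Infinite}

/-- The next-time operator: `(𝕏 g)(s) = ∫ g dF(s)`. -/
noncomputable def nextTime (F : Kernel S S) (g : S → ℝ≥0∞) : S → ℝ≥0∞ :=
  fun s => ∫⁻ y, g y ∂(F s)

/-- A generalised Streett supermartingale (GSSM) for `(F, A, B)`: a measurable
`[0,∞)`-valued function `r` with `(𝕏 r)(x) ≤ r(x) − 1` on `A ∖ B` and
`(𝕏 r)(x) ≤ r(x)` outside `A ∪ B`. -/
def IsGSSM (F : Kernel S S) (A B : Set S) (r : S → ℝ≥0∞) : Prop :=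
  Measurable r ∧ (∀ x, r x ≠ ⊤) ∧
    (∀ x ∈ A \ B, nextTime F r x + 1 ≤ r x) ∧
    (∀ x ∉ A ∪ B, nextTime F r x ≤ r x)

/-!
Off `B`, a GSSM decreases in expectation by one at each visit to `A`, so `r s` bounds the expected
number of visits to `A` before the first visit to `B` for the chain started at `s`. As `r` is
finite, Borel–Cantelli shows that almost surely only finitely many such visits occur. By the Markov
property the same holds after every fixed time `n`. If `B` is visited only finitely often, take `n`
past its last visit: then `A` is visited only finitely often.
-/

open Filter

section VisitAvoiding

variable {α : Type*} {A B : Set α}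

/-- The traces that are in `A` at time `i` and have not visited `B` up to and including time `i`.
Their probabilities sum over `i` to the expected number of visits to `A` before `B` is reached. -/
def visitAvoiding (A B : Set α) (i : ℕ) : Set (ℕ → α) := {ω | ω i ∈ A ∧ ∀ j ≤ i, ω j ∉ B}

theorem preimage_prep_visitAvoiding_of_mem {s : α} (hs : s ∈ B) (i : ℕ) :
    prep s ⁻¹' visitAvoiding A B i = ∅ :=
  eq_empty_of_forall_notMem fun _ hω => hω.2 0 i.zero_le hs

theorem preimage_prep_visitAvoiding_zero_of_notMem {s : α} (hs : s ∉ A) :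
    prep s ⁻¹' visitAvoiding A B 0 = ∅ :=
  eq_empty_of_forall_notMem fun _ hω => hs hω.1

theorem preimage_prep_visitAvoiding_succ {s : α} (hs : s ∉ B) (i : ℕ) :
    prep s ⁻¹' visitAvoiding A B (i + 1) = visitAvoiding A B i := by
  ext ω
  refine and_congr_right fun _ => ⟨fun h j hj => h (j + 1) (by omega), fun h j hj => ?_⟩
  cases j with
  | zero => exact hs
  | succ j => exact h j (by omega)

theorem mem_streett_of_forall_eventually_notMem_visitAvoiding {ω : ℕ → α}
    (hω : ∀ n, ∀ᶠ i in atTop, (fun k => ω (k + n)) ∉ visitAvoiding A B i) : ω ∈ streett A B := by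
  refine or_iff_not_imp_right.2 fun hBfin => ?_
  rw [← Nat.frequently_atTop_iff_infinite, not_frequently] at hBfin
  obtain ⟨n, hn⟩ := eventually_atTop.1 hBfin
  have shifted_notMem : ∀ᶠ i in atTop, ω (i + n) ∉ A :=
    (hω n).mono fun i hi hA => hi ⟨hA, fun j _ => hn (j + n) (by omega)⟩
  have eventually_notMem : ∀ᶠ i in atTop, ω i ∉ A := by
    rwa [← map_add_atTop_eq_nat n, eventually_map]
  rw [← not_infinite, ← Nat.frequently_atTop_iff_infinite, not_frequently]
  exact eventually_notMem

end VisitAvoiding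

theorem measurableSet_visitAvoiding {A B : Set S} (hA : MeasurableSet A) (hB : MeasurableSet B)
    (i : ℕ) : MeasurableSet (visitAvoiding A B i) := by
  have visitAvoiding_eq : visitAvoiding A B i =
      (fun ω : ℕ → S => ω i) ⁻¹' A ∩ ⋂ j ≤ i, (fun ω : ℕ → S => ω j) ⁻¹' Bᶜ := by
    ext ω
    simp [visitAvoiding]
  rw [visitAvoiding_eq]
  exact (measurable_pi_apply i hA).inter <|
    .iInter fun j => .iInter fun _ => measurable_pi_apply j hB.compl

theorem measurableSet_eventually_notMem_visitAvoiding {A B : Set S} (hA : MeasurableSet A)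
    (hB : MeasurableSet B) :
    MeasurableSet {ω : ℕ → S | ∀ᶠ i in atTop, ω ∉ visitAvoiding A B i} := by
  simp only [eventually_atTop, ofPred_exists, ofPred_forall]
  exact .iUnion fun _ => .iInter fun i => .iInter fun _ =>
    (measurableSet_visitAvoiding hA hB i).compl

theorem measurable_uncurry_prep : Measurable (Function.uncurry (prep (S := S))) := by
  rw [measurable_pi_iff]
  rintro (_ | k)
  · exact measurable_fst
  · exact (measurable_pi_apply k).comp measurable_snd

theorem measurable_prep (s : S) : Measurable (prep s) :=
  measurable_uncurry_prep.comp measurable_prodMk_left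

theorem IsGSSM.nextTime_add_indicator_le {F : Kernel S S} {A B : Set S} {r : S → ℝ≥0∞}
    (hr : IsGSSM F A B r) {x : S} (hx : x ∉ B) : nextTime F r x + A.indicator 1 x ≤ r x := by
  obtain ⟨-, -, decrease, nonincrease⟩ := hr
  by_cases hxA : x ∈ A
  · simpa [hxA] using decrease x ⟨hxA, hx⟩
  · simpa [hxA] using nonincrease x (by simp [hxA, hx])

section TraceKernel

/-- The law of the full trace `s, s₁, s₂, …` as a function of its initial state `s`, where `P s` is
the law of the remaining trace `s₁, s₂, …`. It is `0` if `P` is not s-finite. -/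
noncomputable def traceKernel (P : Kernel S (ℕ → S)) : Kernel S (ℕ → S) :=
  (Kernel.id ×ₖ P).map (Function.uncurry prep)

variable {F : Kernel S S} {P : Kernel S (ℕ → S)}

theorem traceKernel_apply [IsSFiniteKernel P] (s : S) :
    traceKernel P s = (P s).map (prep s) := by
  rw [traceKernel, Kernel.map_apply _ measurable_uncurry_prep, Kernel.prod_apply, Kernel.id_apply,
    Measure.dirac_prod, Measure.map_map measurable_uncurry_prep measurable_prodMk_left]
  rfl

theorem traceKernel_apply' [IsSFiniteKernel P] (s : S) {H : Set (ℕ → S)} (hH : MeasurableSet H) :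
    traceKernel P s H = P s (prep s ⁻¹' H) := by
  rw [traceKernel_apply, Measure.map_apply (measurable_prep s) hH]

theorem traceKernel_comp_eq_iff [IsSFiniteKernel P] :
    traceKernel P ∘ₖ F = P ↔ ∀ s, P s = (F s).bind fun t => (P t).map (prep t) := by
  simp_rw [Kernel.ext_iff, Kernel.comp_apply, ← traceKernel_apply, eq_comm]

theorem ae_shift_mem_of_ae_traceKernel_mem [IsSFiniteKernel P] (hP : traceKernel P ∘ₖ F = P)
    {H : Set (ℕ → S)} (hH : MeasurableSet H) (h : ∀ s, ∀ᵐ ω ∂traceKernel P s, ω ∈ H) (n : ℕ)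
    (s : S) : ∀ᵐ ω ∂P s, (fun k => ω (k + n)) ∈ H := by
  induction n generalizing s with
  | zero =>
    rw [← hP]
    exact Kernel.ae_comp_of_ae_ae hH (.of_forall h)
  | succ n ih =>
    have measurableSet_shift : MeasurableSet {ω : ℕ → S | (fun k => ω (k + (n + 1))) ∈ H} :=
      (measurable_pi_lambda _ fun k => measurable_pi_apply (k + (n + 1))) hH
    rw [← hP]
    refine Kernel.ae_comp_of_ae_ae measurableSet_shift (.of_forall fun t => ?_)
    rw [traceKernel_apply, ae_map_iff (measurable_prep t).aemeasurable measurableSet_shift]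
    exact ih t

variable {A B : Set S} {r : S → ℝ≥0∞}

theorem traceKernel_visitAvoiding_of_mem [IsSFiniteKernel P] (hA : MeasurableSet A)
    (hB : MeasurableSet B) {s : S} (hs : s ∈ B) (i : ℕ) :
    traceKernel P s (visitAvoiding A B i) = 0 := by
  rw [traceKernel_apply' s (measurableSet_visitAvoiding hA hB i),
    preimage_prep_visitAvoiding_of_mem hs, measure_empty]

theorem traceKernel_visitAvoiding_zero_le [IsMarkovKernel P] (hA : MeasurableSet A)
    (hB : MeasurableSet B) (s : S) :
    traceKernel P s (visitAvoiding A B 0) ≤ A.indicator 1 s := by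
  rw [traceKernel_apply' s (measurableSet_visitAvoiding hA hB 0)]
  by_cases hs : s ∈ A
  · simpa [hs] using prob_le_one
  · simp [preimage_prep_visitAvoiding_zero_of_notMem hs]

theorem traceKernel_visitAvoiding_succ [IsSFiniteKernel P] (hP : traceKernel P ∘ₖ F = P)
    (hA : MeasurableSet A) (hB : MeasurableSet B) {s : S} (hs : s ∉ B) (i : ℕ) :
    traceKernel P s (visitAvoiding A B (i + 1)) =
      nextTime F (fun t => traceKernel P t (visitAvoiding A B i)) s := by
  rw [traceKernel_apply' s (measurableSet_visitAvoiding hA hB (i + 1)),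
    preimage_prep_visitAvoiding_succ hs, nextTime,
    ← Kernel.comp_apply' _ _ _ (measurableSet_visitAvoiding hA hB i), hP]

theorem sum_traceKernel_visitAvoiding_le [IsMarkovKernel P] (hP : traceKernel P ∘ₖ F = P)
    (hA : MeasurableSet A) (hB : MeasurableSet B)
    (hr : ∀ x ∉ B, nextTime F r x + A.indicator 1 x ≤ r x) (n : ℕ) (s : S) :
    ∑ i ∈ Finset.range n, traceKernel P s (visitAvoiding A B i) ≤ r s := by
  induction n generalizing s with
  | zero => simp
  | succ n ih =>
    by_cases hs : s ∈ B
    · simp [traceKernel_visitAvoiding_of_mem hA hB hs]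
    have later_visits_le :
        ∑ i ∈ Finset.range n, traceKernel P s (visitAvoiding A B (i + 1)) ≤ nextTime F r s := by
      simp_rw [traceKernel_visitAvoiding_succ hP hA hB hs, nextTime]
      rw [← lintegral_finsetSum _ fun i _ =>
        Kernel.measurable_coe _ (measurableSet_visitAvoiding hA hB i)]
      exact lintegral_mono ih
    calc ∑ i ∈ Finset.range (n + 1), traceKernel P s (visitAvoiding A B i)
      _ = ∑ i ∈ Finset.range n, traceKernel P s (visitAvoiding A B (i + 1)) +
            traceKernel P s (visitAvoiding A B 0) := Finset.sum_range_succ' _ n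
      _ ≤ nextTime F r s + A.indicator 1 s :=
        add_le_add later_visits_le (traceKernel_visitAvoiding_zero_le hA hB s)
      _ ≤ r s := hr s hs

theorem ae_traceKernel_eventually_notMem_visitAvoiding [IsMarkovKernel P]
    (hP : traceKernel P ∘ₖ F = P) (hA : MeasurableSet A) (hB : MeasurableSet B)
    (hr : ∀ x ∉ B, nextTime F r x + A.indicator 1 x ≤ r x) {s : S} (hs : r s ≠ ∞) :
    ∀ᵐ ω ∂traceKernel P s, ∀ᶠ i in atTop, ω ∉ visitAvoiding A B i :=
  ae_eventually_notMem <| ne_top_of_le_ne_top hs <|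
    ENNReal.tsum_le_of_sum_range_le fun n => sum_traceKernel_visitAvoiding_le hP hA hB hr n s

end TraceKernel

/-- If a generalised Streett supermartingale exists for `(F, A, B)`, then the
Streett condition for `(A, B)` holds almost surely from every initial state. -/
theorem GSSM_implies_streett_as
    (F : Kernel S S) [IsMarkovKernel F]
    (P : Kernel S (ℕ → S)) [IsMarkovKernel P]
    (hP : ∀ s₀ : S, (P s₀ : Measure (ℕ → S)) = (F s₀).bind fun s₁ => (P s₁).map (prep s₁))
    (A B : Set S) (hA : MeasurableSet A) (hB : MeasurableSet B)
    (hGSSM : ∃ r : S → ℝ≥0∞, IsGSSM F A B r) :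
    ∀ s₀ : S, P s₀ (streett A B) = 1 := by
  intro s₀
  obtain ⟨r, hr⟩ := hGSSM
  have trace_eq : traceKernel P ∘ₖ F = P := traceKernel_comp_eq_iff.2 hP
  have finitely_many_visits (s : S) :
      ∀ᵐ ω ∂traceKernel P s, ∀ᶠ i in atTop, ω ∉ visitAvoiding A B i :=
    ae_traceKernel_eventually_notMem_visitAvoiding trace_eq hA hB
      (fun _ => hr.nextTime_add_indicator_le) (hr.2.1 s)
  have finitely_many_visits_after (n : ℕ) :
      ∀ᵐ ω ∂P s₀, ∀ᶠ i in atTop, (fun k => ω (k + n)) ∉ visitAvoiding A B i :=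
    ae_shift_mem_of_ae_traceKernel_mem trace_eq
      (measurableSet_eventually_notMem_visitAvoiding hA hB) finitely_many_visits n s₀
  have streett_ae : ∀ᵐ ω ∂P s₀, ω ∈ streett A B :=
    (ae_all_iff.2 finitely_many_visits_after).mono fun _ =>
      mem_streett_of_forall_eventually_notMem_visitAvoiding
  exact (measure_congr (eventuallyEq_univ.2 streett_ae)).trans measure_univ
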